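/- The Laplacian spectral radius of Γ(R) equals p³ − 1: every eigenvalue of the Laplacian matrix L(Γ(R)) is at most p³ − 1, and p³ − 1 is an eigenvalue of L(Γ(R)) with multiplicity at least p − 1. -/

import Mathlib

/- `Rng p` models the ring `R = 𝔽_p[u,v]/⟨u², v², uv - vu⟩`:
every element is uniquely `a + b·u + c·v + d·uv` with `a b c d : ZMod p`. -/
set_option synthInstance.maxHeartbeats 1000000
set_option maxHeartbeats 1000000

abbrev Rng (p : ℕ) : Type := DualNumber (DualNumber (ZMod p))

/-- The element `u` of `R` (satisfies `u² = 0`). -/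
def uu (p : ℕ) : Rng p := TrivSqZeroExt.inl DualNumber.eps

/-- The element `v` of `R` (satisfies `v² = 0`). -/
def vv (p : ℕ) : Rng p := DualNumber.eps

/-- The vertex set `Z*(R)`: nonzero zero-divisors of `R`. -/
abbrev Vtx (p : ℕ) : Type := {x : Rng p // x ≠ 0 ∧ ∃ y : Rng p, y ≠ 0 ∧ x * y = 0}

/-- The zero-divisor graph `Γ(R)`. -/
def ZDG (p : ℕ) : SimpleGraph (Vtx p) where
  Adj a b := a ≠ b ∧ (a : Rng p) * (b : Rng p) = 0
  symm := ⟨fun a b h => ⟨h.1.symm, (mul_comm (b : Rng p) (a : Rng p)).trans h.2⟩⟩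
  loopless := ⟨fun a h => h.1 rfl⟩

instance (p : ℕ) : DecidableEq (Rng p) :=
  inferInstanceAs (DecidableEq ((ZMod p × ZMod p) × ZMod p × ZMod p))

instance (p : ℕ) [NeZero p] : Fintype (Rng p) :=
  inferInstanceAs (Fintype ((ZMod p × ZMod p) × ZMod p × ZMod p))

instance (p : ℕ) : DecidableRel (ZDG p).Adj :=
  fun a b => inferInstanceAs (Decidable (a ≠ b ∧ (a : Rng p) * (b : Rng p) = 0))

/-- The adjacency matrix of `Γ(R)` over `ℝ`. -/
def adjMat (p : ℕ) : Matrix (Vtx p) (Vtx p) ℝ :=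
  fun a b => if (ZDG p).Adj a b then 1 else 0

/-- The Laplacian matrix `L = D - A` of `Γ(R)` over `ℝ`. -/
noncomputable def lapMat (p : ℕ) [Fact p.Prime] : Matrix (Vtx p) (Vtx p) ℝ :=
  Matrix.diagonal (fun a => ((ZDG p).degree a : ℝ)) - adjMat p

/-!
The Laplacians of a graph on `n` vertices and of its complement add up to `n • 1 - J`, where `J` is
the all-ones matrix. Both the complement's Laplacian and `J` are positive semidefinite, so no
eigenvalue exceeds `n`; and a vector of sum zero in the kernel of the complement's Laplacian is an
eigenvector for `n`, so `n` has multiplicity at least the number of components of the complement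
minus one. Every universal vertex is a component of the complement.

In a finite local ring with maximal ideal `𝔪` the nonzero zero-divisors are the `|𝔪| - 1` nonzero
elements of `𝔪`, and every nonzero element of `Ann 𝔪` is a universal vertex. Passing from a local
ring `R` to `R[ε]` multiplies `|𝔪|` by `|R|` and leaves `|Ann 𝔪|` unchanged, so two steps starting
from a field with `q` elements give `|𝔪| = q³` and `|Ann 𝔪| = q`.
-/

open Module Matrix IsLocalRing
open scoped DualNumber

section Laplacian

variable {V : Type*}

theorem eq_of_reachable_of_isIsolated {G : SimpleGraph V} {v w : V} (hv : G.IsIsolated v)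
    (h : G.Reachable v w) : v = w := by
  obtain ⟨walk⟩ := h
  cases walk with
  | nil => rfl
  | cons hadj _ => exact absurd hadj (hv _)

theorem ncard_add_one_le_card_connectedComponent_of_isIsolated [Finite V] {G : SimpleGraph V}
    {S : Set V} (hS : ∀ v ∈ S, G.IsIsolated v) (hne : S ≠ Set.univ) :
    S.ncard + 1 ≤ Nat.card G.ConnectedComponent := by
  obtain ⟨z, hz⟩ := (Set.ne_univ_iff_exists_notMem S).mp hne
  have hinj : Set.InjOn G.connectedComponentMk (insert z S) := by
    rintro v (rfl | hv) w hw hvw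
    · rcases hw with rfl | hw
      · rfl
      · exact (eq_of_reachable_of_isIsolated (hS w hw)
          (SimpleGraph.ConnectedComponent.exact hvw.symm)).symm
    · exact eq_of_reachable_of_isIsolated (hS v hv) (SimpleGraph.ConnectedComponent.exact hvw)
  calc S.ncard + 1 = (insert z S).ncard := (Set.ncard_insert_of_notMem hz).symm
    _ = (G.connectedComponentMk '' insert z S).ncard := hinj.ncard_image.symm
    _ ≤ Nat.card G.ConnectedComponent := Set.ncard_le_card _

variable [Fintype V] [DecidableEq V] (G : SimpleGraph V) [DecidableRel G.Adj]

theorem lapMatrix_add_lapMatrix_compl (R : Type*) [Ring R] :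
    G.lapMatrix R + Gᶜ.lapMatrix R = (Fintype.card V : R) • 1 - of 1 := by
  ext v w
  rcases eq_or_ne v w with rfl | hvw
  · have hdeg : G.degree v + Gᶜ.degree v + 1 = Fintype.card V := by
      have := G.degree_lt_card_verts v
      rw [G.degree_compl]
      lia
    simp [SimpleGraph.lapMatrix, SimpleGraph.degMatrix, ← hdeg]
  · by_cases hadj : G.Adj v w <;>
      simp [SimpleGraph.lapMatrix, SimpleGraph.degMatrix, hvw, hadj]

theorem lapMatrix_mulVec_add_lapMatrix_compl_mulVec {R : Type*} [Ring R] (x : V → R) :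
    G.lapMatrix R *ᵥ x + Gᶜ.lapMatrix R *ᵥ x =
      (Fintype.card V : R) • x - fun _ ↦ ∑ v, x v := by
  rw [← add_mulVec, lapMatrix_add_lapMatrix_compl, sub_mulVec, smul_mulVec, one_mulVec]
  congr 1
  ext v
  simp [mulVec, dotProduct]

variable {G}

theorem le_card_of_hasEigenvalue_lapMatrix {μ : ℝ}
    (hμ : End.HasEigenvalue (toLin' (G.lapMatrix ℝ)) μ) : μ ≤ Fintype.card V := by
  obtain ⟨x, hx⟩ := hμ.exists_hasEigenvector
  have hLx : G.lapMatrix ℝ *ᵥ x = μ • x := hx.apply_eq_smul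
  have hpos : 0 < x ⬝ᵥ x := dotProduct_self_star_pos_iff.mpr hx.2
  have hcompl : 0 ≤ x ⬝ᵥ (Gᶜ.lapMatrix ℝ *ᵥ x) :=
    (Gᶜ.posSemidef_lapMatrix ℝ).dotProduct_mulVec_nonneg x
  have hsum : x ⬝ᵥ (fun _ ↦ ∑ v, x v) = (∑ v, x v) ^ 2 := by
    rw [dotProduct, ← Finset.sum_mul, sq]
  have hform : μ * (x ⬝ᵥ x) + x ⬝ᵥ (Gᶜ.lapMatrix ℝ *ᵥ x) =
      Fintype.card V * (x ⬝ᵥ x) - (∑ v, x v) ^ 2 := by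
    have := congrArg (x ⬝ᵥ ·) (lapMatrix_mulVec_add_lapMatrix_compl_mulVec G x)
    simpa only [hLx, dotProduct_add, dotProduct_sub, dotProduct_smul, smul_eq_mul, hsum] using this
  refine le_of_mul_le_mul_right ?_ hpos
  linarith [sq_nonneg (∑ v, x v)]

theorem mem_eigenspace_card_of_lapMatrix_compl_mulVec_eq_zero {x : V → ℝ}
    (hx : Gᶜ.lapMatrix ℝ *ᵥ x = 0) (hsum : ∑ v, x v = 0) :
    x ∈ End.eigenspace (toLin' (G.lapMatrix ℝ)) (Fintype.card V : ℝ) := by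
  have h := lapMatrix_mulVec_add_lapMatrix_compl_mulVec G x
  rw [hx, hsum, add_zero] at h
  rw [End.mem_eigenspace_iff, toLin'_apply, h]
  exact sub_zero _

theorem card_connectedComponent_compl_le_finrank_eigenspace_add_one :
    Nat.card Gᶜ.ConnectedComponent ≤
      finrank ℝ (End.eigenspace (toLin' (G.lapMatrix ℝ)) (Fintype.card V : ℝ)) + 1 := by
  let K := (toLin' (Gᶜ.lapMatrix ℝ)).ker
  let total : K →ₗ[ℝ] ℝ := (∑ v, LinearMap.proj v) ∘ₗ K.subtype
  have hker : total.ker.map K.subtype ≤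
      End.eigenspace (toLin' (G.lapMatrix ℝ)) (Fintype.card V : ℝ) := by
    rintro _ ⟨⟨x, hx⟩, hsum, rfl⟩
    refine mem_eigenspace_card_of_lapMatrix_compl_mulVec_eq_zero hx ?_
    simpa [total] using hsum
  calc Nat.card Gᶜ.ConnectedComponent = finrank ℝ K := by
        rw [Nat.card_eq_fintype_card,
          SimpleGraph.card_connectedComponent_eq_finrank_ker_toLin'_lapMatrix]
    _ = finrank ℝ total.ker + finrank ℝ total.range := by
        rw [add_comm, total.finrank_range_add_finrank_ker]
    _ ≤ _ := by
        gcongr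
        · rw [(total.ker.equivMapOfInjective _ K.injective_subtype).finrank_eq]
          exact Submodule.finrank_mono hker
        · exact (Submodule.finrank_le _).trans_eq (finrank_self ℝ)

theorem ncard_le_finrank_eigenspace_of_subset_universalVerts {S : Set V} (hS : S ⊆ G.universalVerts)
    (hne : S ≠ Set.univ) :
    S.ncard ≤ finrank ℝ (End.eigenspace (toLin' (G.lapMatrix ℝ)) (Fintype.card V : ℝ)) := by
  have hisolated : ∀ v ∈ S, Gᶜ.IsIsolated v := fun v hv ↦
    SimpleGraph.isIsolated_compl_iff_isUniversal.mpr (hS hv)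
  have := ncard_add_one_le_card_connectedComponent_of_isIsolated hisolated hne
  have := card_connectedComponent_compl_le_finrank_eigenspace_add_one (G := G)
  lia

end Laplacian

section ZeroDivisorGraph

/-- The nonzero zero-divisors of a commutative ring, the vertices of its zero-divisor graph. -/
abbrev NonzeroZeroDivisor (R : Type*) [CommRing R] : Type _ :=
  {x : R // x ≠ 0 ∧ ∃ y : R, y ≠ 0 ∧ x * y = 0}

/-- The zero-divisor graph of a commutative ring: distinct nonzero zero-divisors are joined when
their product vanishes. -/
def zeroDivisorGraph (R : Type*) [CommRing R] : SimpleGraph (NonzeroZeroDivisor R) where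
  Adj x y := x ≠ y ∧ (x : R) * y = 0
  symm := ⟨fun x y h ↦ ⟨h.1.symm, by rw [mul_comm, h.2]⟩⟩
  loopless := ⟨fun _ h ↦ h.1 rfl⟩

variable {R : Type*} [CommRing R]

theorem not_isUnit_of_nonzeroZeroDivisor (x : NonzeroZeroDivisor R) : ¬ IsUnit (x : R) := by
  obtain ⟨x, -, y, hy, hxy⟩ := x
  exact fun hx ↦ hy (hx.mul_right_eq_zero.mp hxy)

theorem exists_ne_zero_mul_eq_zero_of_not_isUnit [Finite R] {x : R} (hx : ¬ IsUnit x) :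
    ∃ y : R, y ≠ 0 ∧ x * y = 0 := by
  by_contra! h
  refine hx (isUnit_iff_mem_nonZeroDivisors_of_finite.mpr (mem_nonZeroDivisors_iff_left.mpr ?_))
  exact fun y hxy ↦ by_contra fun hy ↦ h y hy hxy

theorem ncard_nonzeroZeroDivisor_mem_add_one [Finite R] {I : Ideal R} (hI : I ≠ ⊤) :
    {x : NonzeroZeroDivisor R | (x : R) ∈ I}.ncard + 1 = Nat.card I := by
  have himage : Subtype.val '' {x : NonzeroZeroDivisor R | (x : R) ∈ I} = (I : Set R) \ {0} := by
    ext x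
    constructor
    · rintro ⟨x, hx, rfl⟩
      exact ⟨hx, x.2.1⟩
    · rintro ⟨hx, hx0⟩
      have hunit : ¬ IsUnit x := fun h ↦ hI (I.eq_top_of_isUnit_mem hx h)
      exact ⟨⟨x, hx0, exists_ne_zero_mul_eq_zero_of_not_isUnit hunit⟩, hx, rfl⟩
  rw [← Set.ncard_image_of_injective _ Subtype.val_injective, himage,
    Set.ncard_sdiff_singleton_add_one I.zero_mem]
  rfl

variable [IsLocalRing R]

theorem nonzeroZeroDivisor_mem_maximalIdeal (x : NonzeroZeroDivisor R) :
    (x : R) ∈ maximalIdeal R :=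
  (mem_maximalIdeal _).mpr (not_isUnit_of_nonzeroZeroDivisor x)

theorem card_nonzeroZeroDivisor_add_one [Finite R] :
    Nat.card (NonzeroZeroDivisor R) + 1 = Nat.card (maximalIdeal R) := by
  rw [← ncard_nonzeroZeroDivisor_mem_add_one (maximalIdeal.isMaximal R).ne_top,
    ← Set.ncard_univ]
  congr
  exact (Set.eq_univ_of_forall nonzeroZeroDivisor_mem_maximalIdeal).symm

theorem setOf_mem_annihilator_subset_universalVerts :
    {x : NonzeroZeroDivisor R | (x : R) ∈ (maximalIdeal R).annihilator} ⊆
      (zeroDivisorGraph R).universalVerts :=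
  fun _ hx y hxy ↦ ⟨hxy, Submodule.mem_annihilator.mp hx y (nonzeroZeroDivisor_mem_maximalIdeal y)⟩

variable [Finite R] [Fintype (NonzeroZeroDivisor R)]

theorem cast_card_nonzeroZeroDivisor :
    (Fintype.card (NonzeroZeroDivisor R) : ℝ) = Nat.card (maximalIdeal R) - 1 := by
  rw [← card_nonzeroZeroDivisor_add_one, Nat.card_eq_fintype_card]
  push_cast
  ring

variable [DecidableEq (NonzeroZeroDivisor R)] [DecidableRel (zeroDivisorGraph R).Adj]

theorem le_card_maximalIdeal_sub_one_of_hasEigenvalue {μ : ℝ}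
    (hμ : End.HasEigenvalue (toLin' ((zeroDivisorGraph R).lapMatrix ℝ)) μ) :
    μ ≤ Nat.card (maximalIdeal R) - 1 :=
  (le_card_of_hasEigenvalue_lapMatrix hμ).trans_eq cast_card_nonzeroZeroDivisor

theorem card_annihilator_maximalIdeal_le_finrank_eigenspace_add_one
    (hR : ¬ maximalIdeal R ≤ (maximalIdeal R).annihilator) :
    Nat.card (maximalIdeal R).annihilator ≤
      finrank ℝ (End.eigenspace (toLin' ((zeroDivisorGraph R).lapMatrix ℝ))
        (Nat.card (maximalIdeal R) - 1 : ℝ)) + 1 := by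
  obtain ⟨x, hx, hxann⟩ := SetLike.not_le_iff_exists.mp hR
  have hann : (maximalIdeal R).annihilator ≠ ⊤ := fun h ↦ hxann (h ▸ Submodule.mem_top)
  have hx0 : x ≠ 0 := fun h ↦ hxann (h ▸ Submodule.zero_mem _)
  have hne : {x : NonzeroZeroDivisor R | (x : R) ∈ (maximalIdeal R).annihilator} ≠ Set.univ :=
    (Set.ne_univ_iff_exists_notMem _).mpr
      ⟨⟨x, hx0, exists_ne_zero_mul_eq_zero_of_not_isUnit ((mem_maximalIdeal x).mp hx)⟩, hxann⟩
  rw [← ncard_nonzeroZeroDivisor_mem_add_one hann, ← cast_card_nonzeroZeroDivisor]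
  gcongr
  exact ncard_le_finrank_eigenspace_of_subset_universalVerts
    setOf_mem_annihilator_subset_universalVerts hne

end ZeroDivisorGraph

section DualNumber

variable {R : Type*} [CommRing R] [IsLocalRing R]

instance isLocalRing_dualNumber : IsLocalRing R[ε] :=
  have : IsLocalHom (TrivSqZeroExt.fstHom R R R).toRingHom :=
    ⟨fun _ h ↦ TrivSqZeroExt.isUnit_iff_isUnit_fst.mpr h⟩
  (TrivSqZeroExt.fstHom R R R).toRingHom.domain_isLocalRing

theorem mem_maximalIdeal_dualNumber {x : R[ε]} :
    x ∈ maximalIdeal R[ε] ↔ x.fst ∈ maximalIdeal R := by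
  simp only [mem_maximalIdeal, mem_nonunits_iff, TrivSqZeroExt.isUnit_iff_isUnit_fst]

theorem mem_annihilator_maximalIdeal_dualNumber {x : R[ε]} :
    x ∈ (maximalIdeal R[ε]).annihilator ↔
      x.fst = 0 ∧ x.snd ∈ (maximalIdeal R).annihilator := by
  simp only [Submodule.mem_annihilator, smul_eq_mul, mem_maximalIdeal_dualNumber]
  constructor
  · intro h
    have hfst : x.fst = 0 := by
      simpa using congrArg TrivSqZeroExt.snd (h ε (by simp))
    refine ⟨hfst, fun r hr ↦ ?_⟩
    simpa [mul_comm] using congrArg TrivSqZeroExt.snd (h (.inl r) (by simpa using hr))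
  · rintro ⟨hfst, hsnd⟩ y hy
    ext
    · simp [hfst]
    · simp [hfst, hsnd _ hy]

theorem card_maximalIdeal_dualNumber :
    Nat.card (maximalIdeal R[ε]) = Nat.card (maximalIdeal R) * Nat.card R := by
  rw [← Nat.card_prod]
  exact Nat.card_congr
    { toFun x := (⟨x.1.fst, mem_maximalIdeal_dualNumber.mp x.2⟩, x.1.snd)
      invFun y := ⟨(y.1.1, y.2), mem_maximalIdeal_dualNumber.mpr y.1.2⟩ }

theorem card_annihilator_maximalIdeal_dualNumber :
    Nat.card (maximalIdeal R[ε]).annihilator = Nat.card (maximalIdeal R).annihilator :=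
  Nat.card_congr
    { toFun x := ⟨x.1.snd, (mem_annihilator_maximalIdeal_dualNumber.mp x.2).2⟩
      invFun r := ⟨.inr r.1, mem_annihilator_maximalIdeal_dualNumber.mpr ⟨rfl, r.2⟩⟩
      left_inv x := Subtype.ext <| TrivSqZeroExt.ext
        (mem_annihilator_maximalIdeal_dualNumber.mp x.2).1.symm rfl }

theorem not_maximalIdeal_dualNumber_le_annihilator (hR : ¬ IsField R) :
    ¬ maximalIdeal R[ε] ≤ (maximalIdeal R[ε]).annihilator := by
  intro hle
  obtain ⟨r, hr, hr0⟩ := Submodule.exists_mem_ne_zero_of_ne_bot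
    (mt isField_iff_maximalIdeal_eq.mpr hR)
  have hmem : (TrivSqZeroExt.inl r : R[ε]) ∈ maximalIdeal R[ε] :=
    mem_maximalIdeal_dualNumber.mpr hr
  exact hr0 (mem_annihilator_maximalIdeal_dualNumber.mp (hle hmem)).1

theorem not_isField_dualNumber (R : Type*) [CommRing R] [Nontrivial R] : ¬ IsField R[ε] := by
  intro h
  have := h.isDomain
  have hε : (ε : R[ε]) = 0 := mul_self_eq_zero.mp DualNumber.eps_mul_eps
  simpa using congrArg TrivSqZeroExt.snd hε

theorem card_dualNumber (R : Type*) : Nat.card R[ε] = Nat.card R ^ 2 := by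
  rw [sq]
  exact Nat.card_prod R R

variable (K : Type*) [Field K]

theorem card_maximalIdeal_dualNumber_dualNumber :
    Nat.card (maximalIdeal K[ε][ε]) = Nat.card K ^ 3 := by
  rw [card_maximalIdeal_dualNumber, card_maximalIdeal_dualNumber, card_dualNumber,
    maximalIdeal_eq_bot, Nat.card_unique]
  ring

theorem card_annihilator_maximalIdeal_dualNumber_dualNumber :
    Nat.card (maximalIdeal K[ε][ε]).annihilator = Nat.card K := by
  rw [card_annihilator_maximalIdeal_dualNumber, card_annihilator_maximalIdeal_dualNumber,
    maximalIdeal_eq_bot, Submodule.annihilator_bot]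
  exact Nat.card_congr Submodule.topEquiv.toEquiv

end DualNumber

theorem stmt14_general (K : Type*) [Field K] [Finite K] [Fintype (NonzeroZeroDivisor K[ε][ε])]
    [DecidableEq (NonzeroZeroDivisor K[ε][ε])] [DecidableRel (zeroDivisorGraph K[ε][ε]).Adj] :
    (∀ μ : ℝ, End.HasEigenvalue (toLin' ((zeroDivisorGraph K[ε][ε]).lapMatrix ℝ)) μ →
        μ ≤ (Nat.card K : ℝ) ^ 3 - 1) ∧
      Nat.card K - 1 ≤ finrank ℝ
        (End.eigenspace (toLin' ((zeroDivisorGraph K[ε][ε]).lapMatrix ℝ))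
          ((Nat.card K : ℝ) ^ 3 - 1)) := by
  have : Finite K[ε][ε] := inferInstanceAs (Finite ((K × K) × K × K))
  have hcard : (Nat.card (maximalIdeal K[ε][ε]) : ℝ) = (Nat.card K : ℝ) ^ 3 :=
    mod_cast card_maximalIdeal_dualNumber_dualNumber K
  rw [← hcard, Nat.sub_le_iff_le_add, ← card_annihilator_maximalIdeal_dualNumber_dualNumber K]
  have hK := not_maximalIdeal_dualNumber_le_annihilator (not_isField_dualNumber K)
  exact ⟨fun _ ↦ le_card_maximalIdeal_sub_one_of_hasEigenvalue (R := K[ε][ε]),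
    card_annihilator_maximalIdeal_le_finrank_eigenspace_add_one (R := K[ε][ε]) hK⟩

instance (p : ℕ) : DecidableRel (zeroDivisorGraph (Rng p)).Adj :=
  inferInstanceAs (DecidableRel (ZDG p).Adj)

theorem lapMat_eq_lapMatrix_zeroDivisorGraph (p : ℕ) [Fact p.Prime] :
    lapMat p = (zeroDivisorGraph (Rng p)).lapMatrix ℝ :=
  rfl

theorem stmt14 (p : ℕ) [Fact p.Prime] (hodd : Odd p) :
    (∀ μ : ℝ, Module.End.HasEigenvalue (Matrix.toLin' (lapMat p)) μ →
        μ ≤ (p : ℝ) ^ 3 - 1) ∧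
      p - 1 ≤ Module.finrank ℝ
        (Module.End.eigenspace (Matrix.toLin' (lapMat p)) ((p : ℝ) ^ 3 - 1)) := by
  have h := stmt14_general (ZMod p)
  rwa [Nat.card_zmod, ← lapMat_eq_lapMatrix_zeroDivisorGraph] at h
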